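/- arXiv:2412.13613 — 9 statements merged into one kernel-verified Lean document; each statement's English description precedes it below -/
import Mathlib

section
/- Let c1(x), c2(x) ∈ R and let C be the one-generator quasi-cyclic code of length 2n and index 2 generated by (c1(x), c2(x)). Then there exist monic polynomials g1(x), g2(x) in F_q[x] dividing x^n - 1, with g_i(x) h_i(x) = x^n - 1 for i = 1, 2, and polynomials r1(x), r2(x) in F_q[x] with gcd(r_i(x), h_i(x)) = 1 for i = 1, 2, such that C equals the one-generator quasi-cyclic code generated by the images in R of (r1(x)g1(x), r2(x)g2(x)). -/
open Polynomial Matrix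

noncomputable section

variable {F : Type*} [Field F] {n : ℕ}

/-- The symplectic inner product on `F^{2n}`. -/
def sympForm (u v : (Fin n ⊕ Fin n) → F) : F :=
  (∑ i : Fin n, u (Sum.inl i) * v (Sum.inr i)) -
    ∑ i : Fin n, v (Sum.inl i) * u (Sum.inr i)

lemma sympForm_add_left (u w v : (Fin n ⊕ Fin n) → F) :
    sympForm (u + w) v = sympForm u v + sympForm w v := by
  simp [sympForm, add_mul, mul_add, Finset.sum_add_distrib]
  ring

lemma sympForm_smul_left (c : F) (u v : (Fin n ⊕ Fin n) → F) :
    sympForm (c • u) v = c * sympForm u v := by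
  simp [sympForm, Finset.mul_sum, mul_sub, mul_assoc, mul_left_comm]

/-- The symplectic dual of a subspace of `F^{2n}`. -/
def sympDual (C : Submodule F ((Fin n ⊕ Fin n) → F)) :
    Submodule F ((Fin n ⊕ Fin n) → F) where
  carrier := {u | ∀ v ∈ C, sympForm u v = 0}
  add_mem' := by
    intro a b ha hb v hv
    rw [sympForm_add_left, ha v hv, hb v hv, add_zero]
  zero_mem' := by
    intro v hv
    have : (0 : (Fin n ⊕ Fin n) → F) = (0 : F) • 0 := by simp
    rw [this, sympForm_smul_left, zero_mul]
  smul_mem' := by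
    intro c a ha v hv
    rw [sympForm_smul_left, ha v hv, mul_zero]

/-- The `2n × 2n` symplectic matrix `Ω`. -/
def Omat (F : Type*) [Field F] (n : ℕ) : Matrix (Fin n ⊕ Fin n) (Fin n ⊕ Fin n) F :=
  Matrix.fromBlocks 0 1 (-1) 0

/-- The row space of a matrix. -/
def rowSpace {ι κ : Type*} (M : Matrix ι κ F) : Submodule F (κ → F) :=
  Submodule.span F (Set.range fun i => M i)

lemma monic_xn_sub_one (F : Type*) [Field F] {n : ℕ} (hn : n ≠ 0) :
    (X ^ n - 1 : F[X]).Monic := by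
  simpa using Polynomial.monic_X_pow_sub_C (1 : F) hn

/-- The coefficient vector of the canonical degree `< n` representative of an
element of `R = F[x]/(x^n - 1)`, as an `F`-linear map. -/
def toVecL (hn : n ≠ 0) : AdjoinRoot (X ^ n - 1 : F[X]) →ₗ[F] (Fin n → F) :=
  (LinearMap.pi fun i : Fin n => Polynomial.lcoeff F (i : ℕ)) ∘ₗ
    AdjoinRoot.modByMonicHom (monic_xn_sub_one F hn)

/-- The linear map `r ↦ (r·a, r·b)` from `R` to `F^{2n}`. -/
def QCgen (hn : n ≠ 0) (a b : AdjoinRoot (X ^ n - 1 : F[X])) :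
    AdjoinRoot (X ^ n - 1 : F[X]) →ₗ[F] ((Fin n ⊕ Fin n) → F) :=
  LinearMap.pi (Sum.elim
    (fun i => LinearMap.proj i ∘ₗ toVecL hn ∘ₗ LinearMap.mulRight F a)
    (fun i => LinearMap.proj i ∘ₗ toVecL hn ∘ₗ LinearMap.mulRight F b))

/-- The one-generator quasi-cyclic code of length `2n` and index `2`
generated by `(a(x), b(x))`, as a subspace of `F^{2n}`. -/
def QCcode (hn : n ≠ 0) (a b : AdjoinRoot (X ^ n - 1 : F[X])) :
    Submodule F ((Fin n ⊕ Fin n) → F) :=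
  LinearMap.range (QCgen hn a b)

/-- The element of `R` with coefficient vector `v`. -/
def fromVec (v : Fin n → F) : AdjoinRoot (X ^ n - 1 : F[X]) :=
  AdjoinRoot.mk _ (∑ i : Fin n, Polynomial.C (v i) * X ^ (i : ℕ))

/-- The transpose polynomial `ā(x) = x^n a(x⁻¹) mod (x^n - 1)`. -/
def transposePoly (hn : n ≠ 0) (a : AdjoinRoot (X ^ n - 1 : F[X])) :
    AdjoinRoot (X ^ n - 1 : F[X]) :=
  fromVec (fun i => toVecL hn a (-i))

/-- The cyclic code of length `n` generated by (the image of) `g(x)`. -/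
def cyclicCode (hn : n ≠ 0) (g : F[X]) : Submodule F (Fin n → F) :=
  LinearMap.range (toVecL hn ∘ₗ
    LinearMap.mulRight F (AdjoinRoot.mk (X ^ n - 1 : F[X]) g))

/-- The Hamming weight of a vector. -/
def hWeight {ι : Type*} (u : ι → F) : ℕ := {i | u i ≠ 0}.ncard


/-- Every one-generator quasi-cyclic code of length `2n` and
index `2` has a generator of the form `(r₁(x)g₁(x), r₂(x)g₂(x))` with
`gᵢ(x)hᵢ(x) = xⁿ - 1` and `gcd(rᵢ(x), hᵢ(x)) = 1` for `i = 1, 2`. -/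
theorem oneGenQC_generator_form
    {F : Type*} [Field F] [Fintype F] {n : ℕ} (hn : n ≠ 0)
    (c₁ c₂ : AdjoinRoot (X ^ n - 1 : F[X])) :
    ∃ g₁ g₂ h₁ h₂ r₁ r₂ : F[X],
      g₁.Monic ∧ g₂.Monic ∧
      g₁ * h₁ = X ^ n - 1 ∧ g₂ * h₂ = X ^ n - 1 ∧
      IsCoprime r₁ h₁ ∧ IsCoprime r₂ h₂ ∧
      QCcode hn c₁ c₂ =
        QCcode hn (AdjoinRoot.mk (X ^ n - 1 : F[X]) (r₁ * g₁))
          (AdjoinRoot.mk (X ^ n - 1 : F[X]) (r₂ * g₂)) := by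
  have key : ∀ c : AdjoinRoot (X ^ n - 1 : F[X]), ∃ g h r : F[X],
      g.Monic ∧ g * h = X ^ n - 1 ∧ IsCoprime r h ∧
      c = AdjoinRoot.mk (X ^ n - 1 : F[X]) (r * g) := by
    classical
    intro c
    obtain ⟨f, rfl⟩ := AdjoinRoot.mk_surjective c
    have hP : (X ^ n - 1 : F[X]) ≠ 0 := (monic_xn_sub_one F hn).ne_zero
    have hg : gcd f (X ^ n - 1 : F[X]) ≠ 0 := fun h => hP ((gcd_eq_zero_iff _ _).1 h).2
    have hm : (gcd f (X ^ n - 1 : F[X])).Monic := by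
      have := Polynomial.monic_normalize hg
      rwa [normalize_gcd] at this
    obtain ⟨r, hr⟩ := gcd_dvd_left f (X ^ n - 1 : F[X])
    obtain ⟨h, hh⟩ := gcd_dvd_right f (X ^ n - 1 : F[X])
    refine ⟨gcd f (X ^ n - 1 : F[X]), h, r, hm, hh.symm, ?_, ?_⟩
    · obtain ⟨a, b, hab⟩ := exists_gcd_eq_mul_add_mul f (X ^ n - 1 : F[X])
      refine ⟨a, b, mul_left_cancel₀ hg ?_⟩
      linear_combination (-a) * hr - b * hh - hab
    · rw [mul_comm, ← hr]
  obtain ⟨g₁, h₁, r₁, a1, a2, a3, a4⟩ := key c₁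
  obtain ⟨g₂, h₂, r₂, b1, b2, b3, b4⟩ := key c₂
  exact ⟨g₁, g₂, h₁, h₂, r₁, r₂, a1, b1, a2, b2, a3, b3, by rw [← a4, ← b4]⟩


end
end

section
/- Let g1(x), g2(x) be monic divisors of x^n - 1 in F_q[x] with g_i(x) h_i(x) = x^n - 1 for i = 1, 2, and let r1(x), r2(x) in F_q[x] satisfy gcd(r_i(x), h_i(x)) = 1 for i = 1, 2. Let C be the one-generator quasi-cyclic code of length 2n and index 2 generated by the images in R of (r1(x)g1(x), r2(x)g2(x)). Then dim_{F_q}(C) = deg(h(x)), where h(x) = lcm(h1(x), h2(x)). -/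
open Polynomial Matrix

noncomputable section
open scoped Classical

variable {F : Type*} [Field F] {n : ℕ}

/-- If `C = (r₁(x)g₁(x), r₂(x)g₂(x))` is a one-generator QC
code with `gᵢhᵢ = xⁿ - 1` and `gcd(rᵢ, hᵢ) = 1` for `i = 1, 2`, then
`dim C = deg (lcm(h₁, h₂))`. -/
theorem oneGenQC_dim_eq_deg_lcm
    {F : Type*} [Field F] [Fintype F] {n : ℕ} (hn : n ≠ 0)
    (g₁ g₂ h₁ h₂ r₁ r₂ : F[X])
    (hg₁ : g₁.Monic) (hg₂ : g₂.Monic)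
    (hgh₁ : g₁ * h₁ = X ^ n - 1) (hgh₂ : g₂ * h₂ = X ^ n - 1)
    (hr₁ : IsCoprime r₁ h₁) (hr₂ : IsCoprime r₂ h₂) :
    Module.finrank F
        (QCcode hn (AdjoinRoot.mk (X ^ n - 1 : F[X]) (r₁ * g₁))
          (AdjoinRoot.mk (X ^ n - 1 : F[X]) (r₂ * g₂))) =
      (EuclideanDomain.lcm h₁ h₂).natDegree := by
  have key : ∀ (g h r p : F[X]), g.Monic → g * h = X ^ n - 1 → IsCoprime r h →
      (toVecL hn (AdjoinRoot.mk (X ^ n - 1 : F[X]) p *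
        AdjoinRoot.mk (X ^ n - 1 : F[X]) (r * g)) = 0 ↔ h ∣ p) := by
    intro g h r p hg hgh hr
    have hm := monic_xn_sub_one F hn
    have hinj : ∀ a : AdjoinRoot (X ^ n - 1 : F[X]), toVecL hn a = 0 ↔ a = 0 := by
      intro a
      refine ⟨fun ha => ?_, fun ha => by rw [ha, map_zero]⟩
      obtain ⟨q, rfl⟩ := AdjoinRoot.mk_surjective a
      have h0 : q %ₘ (X ^ n - 1) = 0 := by
        ext i
        by_cases hi : i < n
        · have := congrFun ha ⟨i, hi⟩
          simpa [toVecL, AdjoinRoot.modByMonicHom_mk] using this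
        · rw [coeff_zero]
          apply coeff_eq_zero_of_degree_lt
          refine lt_of_lt_of_le (degree_modByMonic_lt q hm) ?_
          have hd : (X ^ n - 1 : F[X]).degree = n := by
            simpa using degree_X_pow_sub_C (Nat.pos_of_ne_zero hn) (1 : F)
          rw [hd]
          exact_mod_cast not_lt.mp hi
      rw [AdjoinRoot.mk_eq_zero]
      exact (modByMonic_eq_zero_iff_dvd hm).1 h0
    rw [hinj, ← map_mul, AdjoinRoot.mk_eq_zero, ← hgh]
    have e : p * (r * g) = g * (r * p) := by ring
    rw [e, mul_dvd_mul_iff_left hg.ne_zero]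
    exact ⟨fun hd => hr.symm.dvd_of_dvd_mul_left hd, fun hd => hd.mul_left r⟩
  set l := EuclideanDomain.lcm h₁ h₂ with hl
  set Q := QCgen hn (AdjoinRoot.mk (X ^ n - 1 : F[X]) (r₁ * g₁))
          (AdjoinRoot.mk (X ^ n - 1 : F[X]) (r₂ * g₂)) with hQ
  let φ : F[X] →ₗ[F] ((Fin n ⊕ Fin n) → F) :=
    Q ∘ₗ (AdjoinRoot.mkₐ (X ^ n - 1 : F[X]) : F[X] →ₐ[F] _).toLinearMap
  have hker : LinearMap.ker φ = (Ideal.span {l}).restrictScalars F := by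
    ext p
    rw [LinearMap.mem_ker, Submodule.restrictScalars_mem, Ideal.mem_span_singleton, hl,
      EuclideanDomain.lcm_dvd_iff, ← key g₁ h₁ r₁ p hg₁ hgh₁ hr₁, ← key g₂ h₂ r₂ p hg₂ hgh₂ hr₂]
    constructor
    · intro h
      exact ⟨funext fun i => congrFun h (Sum.inl i), funext fun i => congrFun h (Sum.inr i)⟩
    · rintro ⟨ha, hb⟩
      funext i
      rcases i with i | i
      · exact congrFun ha i
      · exact congrFun hb i
  have hrange : LinearMap.range φ = LinearMap.range Q :=
    LinearMap.range_comp_of_range_eq_top _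
      (LinearMap.range_eq_top.2 AdjoinRoot.mk_surjective)
  have e := φ.quotKerEquivRange
  rw [hker, hrange] at e
  unfold QCcode
  rw [← hQ, ← e.finrank_eq]
  exact finrank_quotient_span_eq_natDegree

end
end

section
/- Let g(x) be a monic divisor of x^n - 1 in F_q[x] with g(x) h(x) = x^n - 1, and let r1(x), r2(x) in F_q[x] satisfy gcd(r_i(x), h(x)) = 1 for i = 1, 2. Let C be the one-generator quasi-cyclic code of length 2n and index 2 generated by the images in R of (r1(x)g(x), r2(x)g(x)). Then dim_{F_q}(C) = n - deg(g(x)). -/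
open Polynomial Matrix

noncomputable section

variable {F : Type*} [Field F] {n : ℕ}

/-- If `C = (r₁(x)g(x), r₂(x)g(x))` is a one-generator QC
code with `g h = xⁿ - 1` and `gcd(rᵢ, h) = 1` for `i = 1, 2`, then
`dim C = n - deg g`. -/
theorem oneGenQC_sameG_dim
    {F : Type*} [Field F] [Fintype F] {n : ℕ} (hn : n ≠ 0)
    (g h r₁ r₂ : F[X]) (hg : g.Monic) (hgh : g * h = X ^ n - 1)
    (hr₁ : IsCoprime r₁ h) (hr₂ : IsCoprime r₂ h) :
    Module.finrank F
        (QCcode hn (AdjoinRoot.mk (X ^ n - 1 : F[X]) (r₁ * g))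
          (AdjoinRoot.mk (X ^ n - 1 : F[X]) (r₂ * g))) =
      n - g.natDegree := by
  set f : F[X] := X ^ n - 1 with hf
  have hfm : f.Monic := monic_xn_sub_one F hn
  have hfd : f.natDegree = n := by
    rw [hf, show (1 : F[X]) = C 1 by simp]; exact natDegree_X_pow_sub_C
  have hg0 : g ≠ 0 := hg.ne_zero
  have hh0 : h ≠ 0 := by
    rintro rfl
    rw [mul_zero] at hgh
    exact hfm.ne_zero hgh.symm
  have hdeg : g.natDegree + h.natDegree = n := by
    rw [← natDegree_mul hg0 hh0, hgh, hfd]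
  have hinj : ∀ a, toVecL hn a = (0 : Fin n → F) → a = 0 := by
    intro a ha
    obtain ⟨p, rfl⟩ := AdjoinRoot.mk_surjective a
    rw [AdjoinRoot.mk_eq_zero, ← modByMonic_eq_zero_iff_dvd hfm]
    ext i
    rw [coeff_zero]
    by_cases hi : i < n
    · have := congrFun ha ⟨i, hi⟩
      simpa [toVecL] using this
    · apply coeff_eq_zero_of_degree_lt
      refine (degree_modByMonic_lt p hfm).trans_le ?_
      rw [degree_eq_natDegree hfm.ne_zero, hfd]
      exact_mod_cast not_lt.mp hi
  have key : ∀ r p : F[X], IsCoprime r h →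
      (AdjoinRoot.mk f p * AdjoinRoot.mk f (r * g) = 0 ↔ h ∣ p) := by
    intro r p hr
    rw [← map_mul, AdjoinRoot.mk_eq_zero, ← hgh,
      show p * (r * g) = g * (r * p) by ring, mul_dvd_mul_iff_left hg0]
    exact ⟨fun H => hr.symm.dvd_of_dvd_mul_left H, fun H => H.mul_left r⟩
  set a := AdjoinRoot.mk f (r₁ * g) with ha
  set b := AdjoinRoot.mk f (r₂ * g) with hb
  let φ : F[X] →ₗ[F] ((Fin n ⊕ Fin n) → F) :=
    QCgen hn a b ∘ₗ (AdjoinRoot.mkₐ f : F[X] →ₐ[F] AdjoinRoot f).toLinearMap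
  have hφr : LinearMap.range φ = QCcode hn a b := by
    apply LinearMap.range_comp_of_range_eq_top
    rw [LinearMap.range_eq_top]
    exact AdjoinRoot.mk_surjective
  have hφk : LinearMap.ker φ = (Ideal.span {h}).restrictScalars F := by
    ext p
    rw [LinearMap.mem_ker, Submodule.restrictScalars_mem, Ideal.mem_span_singleton]
    change QCgen hn a b (AdjoinRoot.mk f p) = 0 ↔ _
    constructor
    · intro H
      rw [← key r₁ p hr₁]
      apply hinj
      funext i
      exact congrFun H (Sum.inl i)
    · intro H
      have h1 := (key r₁ p hr₁).2 H
      have h2 := (key r₂ p hr₂).2 H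
      funext i
      rcases i with i | i
      · change toVecL hn (AdjoinRoot.mk f p * a) i = 0
        rw [ha, h1, map_zero]; rfl
      · change toVecL hn (AdjoinRoot.mk f p * b) i = 0
        rw [hb, h2, map_zero]; rfl
  rw [← hφr, ← φ.quotKerEquivRange.finrank_eq, hφk]
  have := finrank_quotient_span_eq_natDegree (K := F) (f := h)
  have h3 : Module.finrank F (F[X] ⧸ (Ideal.span {h}).restrictScalars F) = h.natDegree := this
  rw [h3]
  omega

end
end

section
/- Let g(x) be a monic divisor of x^n - 1 in F_q[x] with deg(g(x)) < n and g(x) h(x) = x^n - 1, and let r1(x), r2(x) in F_q[x] satisfy gcd(r_i(x), h(x)) = 1 for i = 1, 2. Let C be the one-generator quasi-cyclic code of length 2n and index 2 generated by the images in R of (r1(x)g(x), r2(x)g(x)), and let d_H be the minimum Hamming weight of the nonzero cyclic code of length n generated by g(x). Then every nonzero codeword of C has Hamming weight at least 2 d_H. -/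
open Polynomial Matrix

noncomputable section

variable {F : Type*} [Field F] {n : ℕ}

lemma toVecL_inj_aux {F : Type*} [Field F] {n : ℕ} (hn : n ≠ 0)
    (a : AdjoinRoot (X ^ n - 1 : F[X])) (ha : toVecL hn a = 0) : a = 0 := by
  have hm := monic_xn_sub_one F hn
  obtain ⟨p, rfl⟩ := AdjoinRoot.mk_surjective a
  have hz : p %ₘ (X ^ n - 1 : F[X]) = 0 := by
    ext i
    by_cases hi : i < n
    · have := congrFun ha ⟨i, hi⟩
      simpa [toVecL, AdjoinRoot.modByMonicHom_mk] using this
    · rw [coeff_zero]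
      apply coeff_eq_zero_of_degree_lt
      refine lt_of_lt_of_le (degree_modByMonic_lt p hm) ?_
      have : (X ^ n - 1 : F[X]).degree = n := by
        simpa using degree_X_pow_sub_C (Nat.pos_of_ne_zero hn) (1 : F)
      rw [this]
      exact_mod_cast not_lt.mp hi
  rw [AdjoinRoot.mk_eq_zero]
  exact (modByMonic_eq_zero_iff_dvd hm).1 hz

lemma hWeight_sum_aux {F : Type*} [Field F] {n : ℕ} (c : (Fin n ⊕ Fin n) → F) :
    hWeight c = hWeight (fun i => c (Sum.inl i)) + hWeight (fun i => c (Sum.inr i)) := by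
  classical
  unfold hWeight
  have : {i | c i ≠ 0} = Set.image Sum.inl {i | c (Sum.inl i) ≠ 0} ∪
      Set.image Sum.inr {i | c (Sum.inr i) ≠ 0} := by
    ext i
    cases i <;> simp
  rw [this, Set.ncard_union_eq, Set.ncard_image_of_injective _ Sum.inl_injective,
    Set.ncard_image_of_injective _ Sum.inr_injective]
  rw [Set.disjoint_left]
  rintro _ ⟨a, _, rfl⟩ ⟨b, _, hb⟩
  cases hb

lemma cancel_coprime_aux {F : Type*} [Field F] {n : ℕ} (g h r : F[X])
    (hgh : g * h = X ^ n - 1) (hr : IsCoprime r h)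
    (s : AdjoinRoot (X ^ n - 1 : F[X]))
    (hs : s * AdjoinRoot.mk (X ^ n - 1 : F[X]) (r * g) = 0) :
    s * AdjoinRoot.mk (X ^ n - 1 : F[X]) g = 0 := by
  obtain ⟨u, v, huv⟩ := hr
  obtain ⟨p, rfl⟩ := AdjoinRoot.mk_surjective s
  rw [← map_mul, AdjoinRoot.mk_eq_zero] at hs ⊢
  obtain ⟨k, hk⟩ := hs
  exact ⟨u * k + v * p, by linear_combination u * hk + v * p * hgh - p * g * huv⟩

/-- If `C = (r₁(x)g(x), r₂(x)g(x))` with `g h = xⁿ - 1`,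
`deg g < n` and `gcd(rᵢ, h) = 1`, and `d_H` is the minimum Hamming weight of
the nonzero cyclic code generated by `g(x)`, then every nonzero codeword of
`C` has Hamming weight at least `2 d_H`. -/
theorem oneGenQC_weight_lower_bound
    {F : Type*} [Field F] [Fintype F] {n : ℕ} (hn : n ≠ 0)
    (g h r₁ r₂ : F[X]) (hg : g.Monic) (hdeg : g.natDegree < n)
    (hgh : g * h = X ^ n - 1)
    (hr₁ : IsCoprime r₁ h) (hr₂ : IsCoprime r₂ h)
    (d : ℕ)
    (hd : IsLeast {w | ∃ c ∈ cyclicCode (F := F) hn g, c ≠ 0 ∧ hWeight c = w} d) :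
    ∀ c ∈ QCcode hn (AdjoinRoot.mk (X ^ n - 1 : F[X]) (r₁ * g))
        (AdjoinRoot.mk (X ^ n - 1 : F[X]) (r₂ * g)),
      c ≠ 0 → 2 * d ≤ hWeight c := by
  rintro c ⟨s, rfl⟩ hc
  have key : ∀ r : F[X], IsCoprime r h →
      s * AdjoinRoot.mk (X ^ n - 1 : F[X]) g ≠ 0 →
      d ≤ hWeight (toVecL hn (s * AdjoinRoot.mk (X ^ n - 1 : F[X]) (r * g))) := by
    intro r hr hs
    refine hd.2 ⟨_, ⟨s * AdjoinRoot.mk _ r, ?_⟩, ?_, rfl⟩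
    · simp [mul_assoc]
    · intro h0
      exact hs (cancel_coprime_aux g h r hgh hr s (toVecL_inj_aux hn _ h0))
  have hs : s * AdjoinRoot.mk (X ^ n - 1 : F[X]) g ≠ 0 := by
    intro h0
    apply hc
    have hz : ∀ r : F[X], s * AdjoinRoot.mk (X ^ n - 1 : F[X]) (r * g) = 0 := by
      intro r
      rw [map_mul, mul_left_comm, h0, mul_zero]
    ext i
    cases i <;> simp only [QCgen, LinearMap.pi_apply, Sum.elim_inl, Sum.elim_inr,
      LinearMap.comp_apply, LinearMap.mulRight_apply, hz, map_zero, Pi.zero_apply]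
  rw [hWeight_sum_aux, two_mul]
  exact add_le_add (key r₁ hr₁ hs) (key r₂ hr₂ hs)

end
end

section
/- Let a(x), b(x) ∈ R and let C be the one-generator quasi-cyclic code of length 2n and index 2 generated by (a(x), b(x)). Then C ⊆ C^{⊥s} if and only if a(x)·b̄(x) - b(x)·ā(x) ≡ 0 mod (x^n - 1), where ā(x) and b̄(x) are the transpose polynomials of a(x) and b(x). -/
open Polynomial Matrix

noncomputable section

variable {F : Type*} [Field F] {n : ℕ}

lemma root_pow_n' : (AdjoinRoot.root (X ^ n - 1 : F[X])) ^ n = 1 := by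
  have h := AdjoinRoot.mk_self (f := (X ^ n - 1 : F[X]))
  rw [map_sub, map_pow, AdjoinRoot.mk_X, map_one] at h
  exact sub_eq_zero.mp h

lemma toVecL_mk' (hn : n ≠ 0) (p : F[X]) (i : Fin n) :
    toVecL hn (AdjoinRoot.mk _ p) i = (p %ₘ (X ^ n - 1)).coeff i := by
  simp [toVecL, AdjoinRoot.modByMonicHom_mk]

lemma toVecL_root_pow_lt (hn : n ≠ 0) (k : ℕ) (hk : k < n) (i : Fin n) :
    toVecL hn (AdjoinRoot.root (X ^ n - 1 : F[X]) ^ k) i = if (i : ℕ) = k then 1 else 0 := by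
  have h1 : (AdjoinRoot.root (X ^ n - 1 : F[X]) ^ k) = AdjoinRoot.mk _ (X ^ k) := by
    rw [map_pow, AdjoinRoot.mk_X]
  rw [h1, toVecL_mk', (Polynomial.modByMonic_eq_self_iff (monic_xn_sub_one F hn)).2, coeff_X_pow]
  rw [degree_X_pow]
  have : (X ^ n - 1 : F[X]).degree = n := by
    simpa using Polynomial.degree_X_pow_sub_C (Nat.pos_of_ne_zero hn) (1 : F)
  rw [this]; exact_mod_cast hk

lemma toVecL_root_pow (hn : n ≠ 0) (k : ℕ) (i : Fin n) :
    toVecL hn (AdjoinRoot.root (X ^ n - 1 : F[X]) ^ k) i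
      = if (i : ℕ) = k % n then 1 else 0 := by
  rw [pow_eq_pow_mod k root_pow_n']
  exact toVecL_root_pow_lt hn _ (Nat.mod_lt _ (Nat.pos_of_ne_zero hn)) i

lemma fromVec_eq (v : Fin n → F) :
    fromVec v = ∑ i : Fin n, v i • AdjoinRoot.root (X ^ n - 1 : F[X]) ^ (i : ℕ) := by
  simp [fromVec, map_sum, Algebra.smul_def, AdjoinRoot.algebraMap_eq]

lemma eq_sum_toVecL (hn : n ≠ 0) (a : AdjoinRoot (X ^ n - 1 : F[X])) :
    a = ∑ i : Fin n, toVecL hn a i • AdjoinRoot.root (X ^ n - 1 : F[X]) ^ (i : ℕ) := by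
  rw [← fromVec_eq]
  have hm := monic_xn_sub_one F hn
  have hd : (X ^ n - 1 : F[X]).natDegree = n := by
    simpa using Polynomial.natDegree_X_pow_sub_C (n := n) (r := (1 : F))
  obtain ⟨p, rfl⟩ := AdjoinRoot.mk_surjective a
  simp only [toVecL_mk', fromVec]
  have h1 : (p %ₘ (X ^ n - 1)).natDegree < n := by
    have := Polynomial.natDegree_modByMonic_lt p hm (by
      intro h; rw [h] at hd; simp at hd; exact hn hd.symm)
    rwa [hd] at this
  rw [Fin.sum_univ_eq_sum_range (fun i => C ((p %ₘ (X ^ n - 1)).coeff i) * X ^ i) n]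
  rw [← Polynomial.as_sum_range_C_mul_X_pow' _ h1]
  exact (AdjoinRoot.mk_leftInverse hm (AdjoinRoot.mk _ p)).symm

/-- Transposition as an algebra homomorphism. -/
def tauHom (F : Type*) [Field F] (n : ℕ) : AdjoinRoot (X ^ n - 1 : F[X]) →ₐ[F] AdjoinRoot (X ^ n - 1 : F[X]) :=
  AdjoinRoot.liftAlgHom _ (Algebra.ofId F _) (AdjoinRoot.root (X ^ n - 1 : F[X]) ^ (n - 1)) (by
    simp only [eval₂_sub, eval₂_pow, eval₂_X, eval₂_one]
    rw [← pow_mul, mul_comm, pow_mul, root_pow_n', one_pow, sub_self])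

lemma tauHom_root : tauHom F n (AdjoinRoot.root _) = AdjoinRoot.root (X ^ n - 1 : F[X]) ^ (n - 1) := by
  simp [tauHom]

lemma pow_congr' {j k : ℕ} (h : j ≡ k [MOD n]) :
    AdjoinRoot.root (X ^ n - 1 : F[X]) ^ j = AdjoinRoot.root (X ^ n - 1 : F[X]) ^ k := by
  rw [pow_eq_pow_mod j root_pow_n', pow_eq_pow_mod k root_pow_n', h]

lemma transposePoly_eq (hn : n ≠ 0) (a : AdjoinRoot (X ^ n - 1 : F[X])) :
    transposePoly hn a = tauHom F n a := by
  haveI : NeZero n := ⟨hn⟩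
  conv_rhs => rw [eq_sum_toVecL hn a]
  rw [transposePoly, fromVec_eq, map_sum]
  refine Fintype.sum_equiv (Equiv.neg (Fin n)) _ _ fun i => ?_
  simp only [Equiv.neg_apply, map_smul, map_pow, tauHom_root, ← pow_mul]
  congr 1
  apply pow_congr'
  rw [← ZMod.natCast_eq_natCast_iff]
  have hi := i.2
  have h : ((n - 1 : ℕ) : ZMod n) = -1 := by
    rw [Nat.cast_sub (Nat.pos_of_ne_zero hn)]; simp
  rw [Nat.cast_mul, h, Fin.val_neg', ZMod.natCast_mod, Nat.cast_sub hi.le]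
  simp

lemma tauHom_tauHom (hn : n ≠ 0) (a : AdjoinRoot (X ^ n - 1 : F[X])) :
    tauHom F n (tauHom F n a) = a := by
  have : (tauHom F n).comp (tauHom F n) = AlgHom.id F _ := by
    apply AdjoinRoot.algHom_ext
    simp only [AlgHom.comp_apply, tauHom_root, map_pow, AlgHom.id_apply, ← pow_mul]
    conv_rhs => rw [← pow_one (AdjoinRoot.root _)]
    apply pow_congr'
    rw [← ZMod.natCast_eq_natCast_iff, Nat.cast_mul, Nat.cast_sub (Nat.pos_of_ne_zero hn)]
    simp
  exact DFunLike.congr_fun this a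

lemma dot_eq (hn : n ≠ 0) (u v : AdjoinRoot (X ^ n - 1 : F[X])) :
    ∑ i, toVecL hn u i * toVecL hn v i
      = toVecL hn (u * tauHom F n v) ⟨0, Nat.pos_of_ne_zero hn⟩ := by
  conv_rhs => rw [eq_sum_toVecL hn u, eq_sum_toVecL hn v]
  simp only [map_sum, map_smul, map_pow, tauHom_root, ← pow_mul, Finset.sum_mul, Finset.mul_sum,
    smul_mul_smul_comm, ← pow_add, Finset.sum_apply, Pi.smul_apply, toVecL_root_pow, smul_eq_mul]
  refine Finset.sum_congr rfl fun i _ => ?_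
  rw [Finset.sum_eq_single i]
  · rw [if_pos, mul_one]
    obtain ⟨m, rfl⟩ := Nat.exists_eq_succ_of_ne_zero hn
    have : (i : ℕ) + (m.succ - 1) * i = m.succ * i := by
      simp only [Nat.succ_sub_one, Nat.succ_eq_add_one]; ring
    rw [this]; simp
  · intro j _ hj
    rw [if_neg, mul_zero]
    intro h
    apply hj
    have h2 : (((j : ℕ) + (n - 1) * i : ℕ) : ZMod n) = 0 := by
      rw [ZMod.natCast_eq_zero_iff]; exact Nat.dvd_of_mod_eq_zero h.symm
    rw [Nat.cast_add, Nat.cast_mul, Nat.cast_sub (Nat.pos_of_ne_zero hn)] at h2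
    have h3 : ((i : ℕ) : ZMod n) = ((j : ℕ) : ZMod n) := by
      simp at h2; linear_combination -h2
    rw [ZMod.natCast_eq_natCast_iff] at h3
    exact Fin.ext (Nat.ModEq.eq_of_lt_of_lt h3 i.2 j.2).symm
  · simp

lemma sympForm_QCgen (hn : n ≠ 0) (a b r s : AdjoinRoot (X ^ n - 1 : F[X])) :
    sympForm (QCgen hn a b r) (QCgen hn a b s)
      = ∑ i, toVecL hn (r * (a * transposePoly hn b - b * transposePoly hn a)) i
          * toVecL hn s i := by
  have h : sympForm (QCgen hn a b r) (QCgen hn a b s)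
      = (∑ i, toVecL hn (r * a) i * toVecL hn (s * b) i)
        - ∑ i, toVecL hn (r * b) i * toVecL hn (s * a) i := by
    simp [sympForm, QCgen, mul_comm (toVecL hn (s * a) _)]
  rw [h, dot_eq, dot_eq, dot_eq, ← Pi.sub_apply, ← map_sub, transposePoly_eq, transposePoly_eq,
    map_mul, map_mul]
  have e : r * a * (tauHom F n s * tauHom F n b) - r * b * (tauHom F n s * tauHom F n a)
      = r * (a * tauHom F n b - b * tauHom F n a) * tauHom F n s := by ring
  rw [e]

/-- The one-generator QC code generated by `(a(x), b(x))` is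
symplectic self-orthogonal iff
`a(x)·b̄(x) - b(x)·ā(x) ≡ 0 mod (xⁿ - 1)`. -/
theorem oneGenQC_selfOrthogonal_iff_poly
    {F : Type*} [Field F] [Fintype F] {n : ℕ} (hn : n ≠ 0)
    (a b : AdjoinRoot (X ^ n - 1 : F[X])) :
    QCcode hn a b ≤ sympDual (QCcode hn a b) ↔
      a * transposePoly hn b - b * transposePoly hn a = 0 := by
  constructor
  · intro h
    set m := a * transposePoly hn b - b * transposePoly hn a with hm
    have key : ∀ s, ∑ i, toVecL hn m i * toVecL hn s i = 0 := by
      intro s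
      have := h (LinearMap.mem_range_self (QCgen hn a b) 1) _
        (LinearMap.mem_range_self (QCgen hn a b) s)
      rwa [sympForm_QCgen, one_mul] at this
    rw [eq_sum_toVecL hn m]
    refine Finset.sum_eq_zero fun i _ => ?_
    have := key (AdjoinRoot.root _ ^ (i : ℕ))
    simp only [toVecL_root_pow_lt hn _ i.2, ← Fin.ext_iff] at this
    simp at this
    rw [this, zero_smul]
  · rintro h _ ⟨r, rfl⟩ _ ⟨s, rfl⟩
    rw [sympForm_QCgen, h]
    simp

end
end

section
/- Let a(x), b(x) ∈ F_q[x] and let C be the one-generator quasi-cyclic code of length 2n and index 2 generated by the images of (a(x), b(x)) in R. Then dim_{F_q}(C) = n - deg(f(x)), where f(x) = gcd(a(x), b(x), x^n - 1) in F_q[x]. -/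
open Polynomial Matrix

noncomputable section
open scoped Classical

variable {F : Type*} [Field F] {n : ℕ}

theorem toVecL_mk_eq_zero_iff {F : Type*} [Field F] {n : ℕ} (hn : n ≠ 0) (p : F[X]) :
    toVecL hn (AdjoinRoot.mk (X ^ n - 1 : F[X]) p) = 0 ↔ (X ^ n - 1 : F[X]) ∣ p := by
  rw [← Polynomial.modByMonic_eq_zero_iff_dvd (monic_xn_sub_one F hn)]
  have hdeg : (X ^ n - 1 : F[X]).degree = n := by
    simpa using Polynomial.degree_X_pow_sub_C (Nat.pos_of_ne_zero hn) (1 : F)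
  constructor
  · intro h
    ext i
    by_cases hi : i < n
    · have := congrFun h ⟨i, hi⟩
      simpa [toVecL] using this
    · rw [coeff_zero]
      apply coeff_eq_zero_of_degree_lt
      refine lt_of_lt_of_le (degree_modByMonic_lt p (monic_xn_sub_one F hn)) ?_
      rw [hdeg]
      exact_mod_cast not_lt.mp hi
  · intro h
    ext i
    simp [toVecL, h]

theorem QCgen_mk_eq_zero_iff {F : Type*} [Field F] {n : ℕ} (hn : n ≠ 0) (a b r : F[X]) :
    QCgen hn (AdjoinRoot.mk (X ^ n - 1 : F[X]) a) (AdjoinRoot.mk (X ^ n - 1 : F[X]) b)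
      (AdjoinRoot.mk (X ^ n - 1 : F[X]) r) = 0 ↔
      (X ^ n - 1 : F[X]) ∣ r * a ∧ (X ^ n - 1 : F[X]) ∣ r * b := by
  rw [← toVecL_mk_eq_zero_iff hn, ← toVecL_mk_eq_zero_iff hn, map_mul (AdjoinRoot.mk _), map_mul (AdjoinRoot.mk _)]
  constructor
  · intro h
    refine ⟨funext fun i => ?_, funext fun i => ?_⟩
    · simpa [QCgen] using congrFun h (Sum.inl i)
    · simpa [QCgen] using congrFun h (Sum.inr i)
  · rintro ⟨h1, h2⟩
    funext i
    rcases i with i | i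
    · simpa [QCgen] using congrFun h1 i
    · simpa [QCgen] using congrFun h2 i

/-- The one-generator QC code generated by the images of
`(a(x), b(x))` in `R` has dimension `n - deg f`, where
`f = gcd(a(x), b(x), xⁿ - 1)`. -/
theorem oneGenQC_dim_eq
    {F : Type*} [Field F] [Fintype F] {n : ℕ} (hn : n ≠ 0)
    (a b : F[X]) :
    Module.finrank F
        (QCcode hn (AdjoinRoot.mk (X ^ n - 1 : F[X]) a)
          (AdjoinRoot.mk (X ^ n - 1 : F[X]) b)) =
      n - (EuclideanDomain.gcd a (EuclideanDomain.gcd b (X ^ n - 1))).natDegree := by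
  set N : F[X] := X ^ n - 1 with hN
  set f := EuclideanDomain.gcd a (EuclideanDomain.gcd b N) with hf
  have hmon : N.Monic := monic_xn_sub_one F hn
  have hN0 : N ≠ 0 := hmon.ne_zero
  have hNdeg : N.natDegree = n := by
    simpa using Polynomial.natDegree_X_pow_sub_C (n := n) (r := (1 : F))
  have hfb : f ∣ EuclideanDomain.gcd b N := EuclideanDomain.gcd_dvd_right _ _
  obtain ⟨h, hh⟩ : f ∣ N := hfb.trans (EuclideanDomain.gcd_dvd_right _ _)
  have hfa : f ∣ a := EuclideanDomain.gcd_dvd_left _ _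
  have hfb' : f ∣ b := hfb.trans (EuclideanDomain.gcd_dvd_left _ _)
  have hf0 : f ≠ 0 := by
    intro h0
    rw [h0, zero_mul] at hh
    exact hN0 hh
  have hh0 : h ≠ 0 := by
    intro h0
    rw [h0, mul_zero] at hh
    exact hN0 hh
  have hbez : ∃ u v w : F[X], f = a * u + b * v + N * w := by
    refine ⟨EuclideanDomain.gcdA a (EuclideanDomain.gcd b N),
      EuclideanDomain.gcdA b N * EuclideanDomain.gcdB a (EuclideanDomain.gcd b N),
      EuclideanDomain.gcdB b N * EuclideanDomain.gcdB a (EuclideanDomain.gcd b N), ?_⟩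
    have h1 := EuclideanDomain.gcd_eq_gcd_ab a (EuclideanDomain.gcd b N)
    have h2 := EuclideanDomain.gcd_eq_gcd_ab b N
    linear_combination h1 + EuclideanDomain.gcdB a (EuclideanDomain.gcd b N) * h2
  have key : ∀ r : F[X], (N ∣ r * a ∧ N ∣ r * b) ↔ h ∣ r := by
    intro r
    constructor
    · rintro ⟨⟨s, hs⟩, ⟨t, ht⟩⟩
      obtain ⟨u, v, w, hb⟩ := hbez
      have : f * h ∣ f * r := by
        rw [← hh]
        exact ⟨s * u + t * v + r * w, by linear_combination r * hb + u * hs + v * ht⟩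
      exact (mul_dvd_mul_iff_left hf0).mp this
    · intro hr
      rw [hh, mul_comm f h]
      exact ⟨mul_dvd_mul hr hfa, mul_dvd_mul hr hfb'⟩
  let φ : F[X] →ₗ[F] ((Fin n ⊕ Fin n) → F) :=
    QCgen hn (AdjoinRoot.mk N a) (AdjoinRoot.mk N b) ∘ₗ (AdjoinRoot.mkₐ N : F[X] →ₐ[F] AdjoinRoot N).toLinearMap
  have hrange : QCcode hn (AdjoinRoot.mk N a) (AdjoinRoot.mk N b) = LinearMap.range φ := by
    rw [LinearMap.range_comp_of_range_eq_top]
    · rfl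
    · exact LinearMap.range_eq_top.mpr AdjoinRoot.mk_surjective
  have hker : LinearMap.ker φ = (Ideal.span {h}).restrictScalars F := by
    ext r
    rw [LinearMap.mem_ker, Submodule.restrictScalars_mem, Ideal.mem_span_singleton, ← key r]
    exact QCgen_mk_eq_zero_iff hn a b r
  rw [hrange, ← φ.quotKerEquivRange.finrank_eq, hker]
  have hfin : Module.finrank F (F[X] ⧸ Ideal.span {h}) = h.natDegree :=
    finrank_quotient_span_eq_natDegree
  have hdeg : n = f.natDegree + h.natDegree := by
    rw [← natDegree_mul hf0 hh0, ← hh, hNdeg]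
  have : n - f.natDegree = h.natDegree := by omega
  rw [this, ← hfin]
  exact (Submodule.Quotient.restrictScalarsEquiv F (Ideal.span {h})).finrank_eq

end
end

section
/- Let a(x), b(x) ∈ F_q[x] and let C be the one-generator quasi-cyclic code of length 2n and index 2 generated by the images of (a(x), b(x)) in R. If C is symplectic dual-containing, i.e., C^{⊥s} ⊆ C, then gcd(a(x), b(x), x^n - 1) has degree 0; equivalently, dim_{F_q}(C) = n and hence C = C^{⊥s}. -/
open Polynomial Matrix

noncomputable section
open scoped Classical

variable {F : Type*} [Field F] {n : ℕ}

lemma sympForm_add_right' {F : Type*} [Field F] {n : ℕ} (u v w : (Fin n ⊕ Fin n) → F) :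
    sympForm u (v + w) = sympForm u v + sympForm u w := by
  simp [sympForm, add_mul, mul_add, Finset.sum_add_distrib]
  ring

lemma sympForm_smul_right' {F : Type*} [Field F] {n : ℕ} (c : F) (u v : (Fin n ⊕ Fin n) → F) :
    sympForm u (c • v) = c * sympForm u v := by
  simp [sympForm, Finset.mul_sum, mul_sub, mul_assoc, mul_left_comm]

/-- `u ↦ ⟨u, ·⟩` restricted to `C`. -/
def sympMap {F : Type*} [Field F] {n : ℕ} (C : Submodule F ((Fin n ⊕ Fin n) → F)) :
    ((Fin n ⊕ Fin n) → F) →ₗ[F] (Module.Dual F C) :=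
  LinearMap.mk₂ F (fun u (v : C) => sympForm u (v : (Fin n ⊕ Fin n) → F))
    (fun u w v => sympForm_add_left u w v)
    (fun c u v => sympForm_smul_left c u v)
    (fun u v w => sympForm_add_right' u v w)
    (fun c u v => sympForm_smul_right' c u v)

lemma ker_sympMap {F : Type*} [Field F] {n : ℕ} (C : Submodule F ((Fin n ⊕ Fin n) → F)) :
    LinearMap.ker (sympMap C) = sympDual C := by
  ext u
  rw [LinearMap.mem_ker]
  constructor
  · intro h v hv
    exact LinearMap.congr_fun h ⟨v, hv⟩
  · intro h
    ext v
    exact h v v.2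

lemma finrank_sympDual_add {F : Type*} [Field F] {n : ℕ}
    (C : Submodule F ((Fin n ⊕ Fin n) → F)) :
    2 * n ≤ Module.finrank F (sympDual C) + Module.finrank F C := by
  have h := LinearMap.finrank_range_add_finrank_ker (sympMap C)
  have h2 := Submodule.finrank_le (LinearMap.range (sympMap C))
  rw [Subspace.dual_finrank_eq] at h2
  rw [ker_sympMap, Module.finrank_fintype_fun_eq_card] at h
  simp at h
  omega

/-- If the one-generator QC code `C` generated by the images
of `(a(x), b(x))` is symplectic dual-containing, then
`gcd(a(x), b(x), xⁿ - 1)` has degree `0`; equivalently `dim C = n` and hence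
`C = C^{⊥s}`. -/
theorem oneGenQC_dualContaining
    {F : Type*} [Field F] [Fintype F] {n : ℕ} (hn : n ≠ 0)
    (a b : F[X])
    (C : Submodule F ((Fin n ⊕ Fin n) → F))
    (hC : C = QCcode hn (AdjoinRoot.mk (X ^ n - 1 : F[X]) a)
      (AdjoinRoot.mk (X ^ n - 1 : F[X]) b))
    (hdc : sympDual C ≤ C) :
    (EuclideanDomain.gcd a (EuclideanDomain.gcd b (X ^ n - 1))).natDegree = 0 ∧
      Module.finrank F C = n ∧ C = sympDual C := by
  have hm := monic_xn_sub_one F hn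
  have hdeg : (X ^ n - 1 : F[X]).natDegree = n := by
    simpa using Polynomial.natDegree_X_pow_sub_C (n := n) (r := (1 : F))
  have hfin : Module.Finite F (AdjoinRoot (X ^ n - 1 : F[X])) := hm.finite_adjoinRoot
  have hR : Module.finrank F (AdjoinRoot (X ^ n - 1 : F[X])) = n := by
    rw [(AdjoinRoot.powerBasis hm.ne_zero).finrank, AdjoinRoot.powerBasis_dim, hdeg]
  have h1 := finrank_sympDual_add C
  have h2 := Submodule.finrank_mono hdc
  have h3 : Module.finrank F C ≤ n := by
    rw [hC, QCcode]
    exact (LinearMap.finrank_range_le _).trans_eq hR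
  have h4 : Module.finrank F C = n := by omega
  refine ⟨?_, h4, (Submodule.eq_of_le_of_finrank_le hdc (by omega)).symm⟩
  have hrn := LinearMap.finrank_range_add_finrank_ker
    (QCgen hn (AdjoinRoot.mk (X ^ n - 1 : F[X]) a) (AdjoinRoot.mk (X ^ n - 1 : F[X]) b))
  rw [hC, QCcode] at h4
  rw [h4, hR] at hrn
  have hker := Submodule.finrank_eq_zero.mp (show Module.finrank F (LinearMap.ker
    (QCgen hn (AdjoinRoot.mk (X ^ n - 1 : F[X]) a) (AdjoinRoot.mk (X ^ n - 1 : F[X]) b))) = 0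
    by omega)
  set g := EuclideanDomain.gcd a (EuclideanDomain.gcd b (X ^ n - 1)) with hg
  have hga : g ∣ a := EuclideanDomain.gcd_dvd_left _ _
  have hgb : g ∣ b := (EuclideanDomain.gcd_dvd_right _ _).trans (EuclideanDomain.gcd_dvd_left _ _)
  have hgx : g ∣ X ^ n - 1 :=
    (EuclideanDomain.gcd_dvd_right _ _).trans (EuclideanDomain.gcd_dvd_right _ _)
  obtain ⟨h, hh⟩ := hgx
  have key : ∀ c, g ∣ c → AdjoinRoot.mk (X ^ n - 1 : F[X]) h * AdjoinRoot.mk _ c = 0 := by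
    rintro c ⟨d, rfl⟩
    rw [← map_mul, AdjoinRoot.mk_eq_zero]
    exact ⟨d, by rw [hh]; ring⟩
  have hz : AdjoinRoot.mk (X ^ n - 1 : F[X]) h = 0 := by
    rw [← Submodule.mem_bot F, ← hker, LinearMap.mem_ker]
    ext i
    rcases i with i | i
    · simp [QCgen, key a hga]
    · simp [QCgen, key b hgb]
  rw [AdjoinRoot.mk_eq_zero] at hz
  have hgh : g * h ≠ 0 := hh ▸ hm.ne_zero
  have hg0 := left_ne_zero_of_mul hgh
  have hh0 := right_ne_zero_of_mul hgh
  have hle := Polynomial.natDegree_le_of_dvd hz hh0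
  rw [hh, Polynomial.natDegree_mul hg0 hh0] at hle
  omega


end
end

section
/- Let a_1(x), b_1(x), a_2(x), b_2(x) ∈ R, let A_i and B_i be the n×n circulant matrices generated by a_i(x) and b_i(x) for i = 1, 2, and let C ⊆ F_q^{2n} be the row space of the 2n×2n block matrix G = ((A_1, B_1), (A_2, B_2)), i.e., the two-generator quasi-cyclic code of length 2n and index 2 generated by (a_1(x), b_1(x)) and (a_2(x), b_2(x)). Then C ⊆ C^{⊥s} if and only if A_1 B_1ᵗ = B_1 A_1ᵗ, A_2 B_2ᵗ = B_2 A_2ᵗ, and A_1 B_2ᵗ = B_1 A_2ᵗ, where Aᵗ denotes the transpose of A. -/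
open Polynomial Matrix

noncomputable section

variable {F : Type*} [Field F] {n : ℕ}

/-- A two-generator QC code of length `2n` and index `2` with
generator matrix `G = ((A₁, B₁), (A₂, B₂))`, built from the circulant matrices
of `a₁, b₁, a₂, b₂`, is symplectic self-orthogonal iff `A₁B₁ᵗ = B₁A₁ᵗ`,
`A₂B₂ᵗ = B₂A₂ᵗ` and `A₁B₂ᵗ = B₁A₂ᵗ`. -/
theorem twoGenQC_selfOrthogonal_iff_matrix
    {F : Type*} [Field F] [Fintype F] {n : ℕ} (hn : n ≠ 0)
    (a₁ b₁ a₂ b₂ : AdjoinRoot (X ^ n - 1 : F[X]))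
    (A₁ B₁ A₂ B₂ : Matrix (Fin n) (Fin n) F)
    (hA₁ : A₁ = Matrix.circulant (toVecL hn a₁))
    (hB₁ : B₁ = Matrix.circulant (toVecL hn b₁))
    (hA₂ : A₂ = Matrix.circulant (toVecL hn a₂))
    (hB₂ : B₂ = Matrix.circulant (toVecL hn b₂))
    (C : Submodule F ((Fin n ⊕ Fin n) → F))
    (hC : C = rowSpace (Matrix.fromBlocks A₁ B₁ A₂ B₂)) :
    C ≤ sympDual C ↔
      A₁ * B₁ᵀ = B₁ * A₁ᵀ ∧ A₂ * B₂ᵀ = B₂ * A₂ᵀ ∧ A₁ * B₂ᵀ = B₁ * A₂ᵀ := by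
  clear hA₁ hB₁ hA₂ hB₂
  have key : C ≤ sympDual C ↔ ∀ i j, sympForm (Matrix.fromBlocks A₁ B₁ A₂ B₂ i)
      (Matrix.fromBlocks A₁ B₁ A₂ B₂ j) = 0 := by
    subst hC
    constructor
    · intro h i j
      exact h (Submodule.subset_span ⟨i, rfl⟩) _ (Submodule.subset_span ⟨j, rfl⟩)
    · intro h
      refine Submodule.span_le.2 ?_
      rintro _ ⟨i, rfl⟩ v hv
      have hanti : ∀ u w : (Fin n ⊕ Fin n) → F, sympForm u w = - sympForm w u := by
        intro u w
        simp [sympForm]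
      refine Submodule.span_induction (p := fun v _ =>
        sympForm (Matrix.fromBlocks A₁ B₁ A₂ B₂ i) v = 0) ?_ ?_ ?_ ?_ hv
      · rintro _ ⟨j, rfl⟩
        exact h i j
      · simp [sympForm]
      · intro x y _ _ hx hy
        rw [hanti] at hx hy ⊢
        rw [sympForm_add_left, neg_add, hx, hy, add_zero]
      · intro c x _ hx
        rw [hanti] at hx ⊢
        rw [sympForm_smul_left, neg_eq_zero.1 hx, mul_zero, neg_zero]
  have entry : ∀ (P Q S T : Matrix (Fin n) (Fin n) F), P * Qᵀ = S * Tᵀ ↔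
      ∀ i j, (∑ k, P i k * Q j k) - ∑ k, T j k * S i k = 0 := by
    intro P Q S T
    rw [← Matrix.ext_iff]
    refine forall_congr' fun i => forall_congr' fun j => ?_
    rw [sub_eq_zero, Matrix.mul_apply, Matrix.mul_apply]
    simp only [Matrix.transpose_apply, mul_comm (T j _)]
  rw [key, entry, entry, entry]
  constructor
  · intro h
    exact ⟨fun i j => h (Sum.inl i) (Sum.inl j), fun i j => h (Sum.inr i) (Sum.inr j),
      fun i j => h (Sum.inl i) (Sum.inr j)⟩
  · rintro ⟨h1, h2, h3⟩ (i | i) (j | j)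
    · exact h1 i j
    · exact h3 i j
    · have := h3 j i
      rw [← neg_eq_zero, neg_sub] at this
      exact this
    · exact h2 i j

end
end

section
/- Let C ⊆ F_q^{2n} be a linear code, let p_1(x), q_1(x), p_2(x), q_2(x) ∈ R, let P_i and Q_i be the n×n circulant matrices generated by p_i(x) and q_i(x) for i = 1, 2, and suppose the row space of the 2n×2n block matrix H = ((P_1, Q_1), (P_2, Q_2)) equals the symplectic dual C^{⊥s}. Then C^{⊥s} ⊆ C if and only if P_1 Q_1ᵗ = Q_1 P_1ᵗ, P_2 Q_2ᵗ = Q_2 P_2ᵗ, and P_1 Q_2ᵗ = Q_1 P_2ᵗ, where Pᵗ denotes the transpose of P. -/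
open Polynomial Matrix

noncomputable section

variable {F : Type*} [Field F] {n : ℕ}

lemma sympForm_swap (u v : (Fin n ⊕ Fin n) → F) : sympForm u v = - sympForm v u := by
  simp [sympForm]

/-- The symplectic form as a bilinear form. -/
def sympBilin (F : Type*) [Field F] (n : ℕ) : LinearMap.BilinForm F ((Fin n ⊕ Fin n) → F) :=
  LinearMap.mk₂ F sympForm sympForm_add_left
    (fun c u v => by rw [sympForm_smul_left, smul_eq_mul])
    (fun u v w => by
      rw [sympForm_swap, sympForm_add_left, sympForm_swap u v, sympForm_swap u w]; ring)
    (fun c u v => by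
      rw [sympForm_swap, sympForm_smul_left, sympForm_swap u v, smul_eq_mul]; ring)

lemma sympBilin_apply (u v : (Fin n ⊕ Fin n) → F) : sympBilin F n u v = sympForm u v := rfl

lemma sympBilin_isRefl : (sympBilin F n).IsRefl := by
  intro u v h
  rw [sympBilin_apply] at *
  rw [sympForm_swap, h, neg_zero]

lemma sympBilin_nondeg : (sympBilin F n).Nondegenerate := by
  have hr : LinearMap.IsRefl (sympBilin F n) := fun u v h => sympBilin_isRefl u v h
  refine hr.nondegenerate_iff_separatingLeft.2 ?_
  intro u h
  funext k
  rcases k with k | k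
  · have := h (Pi.single (Sum.inr k) 1)
    simpa [sympBilin_apply, sympForm, Pi.single_apply] using this
  · have := h (Pi.single (Sum.inl k) 1)
    simpa [sympBilin_apply, sympForm, Pi.single_apply] using this

lemma sympDual_eq (C : Submodule F ((Fin n ⊕ Fin n) → F)) :
    sympDual C = (sympBilin F n).orthogonal C := by
  ext u
  constructor
  · intro h v hv
    exact sympBilin_isRefl _ _ (h v hv)
  · intro h v hv
    exact sympBilin_isRefl _ _ (h v hv)

lemma sympDual_sympDual (C : Submodule F ((Fin n ⊕ Fin n) → F)) :
    sympDual (sympDual C) = C := by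
  rw [sympDual_eq, sympDual_eq]
  exact LinearMap.BilinForm.orthogonal_orthogonal sympBilin_nondeg sympBilin_isRefl C

lemma rowSpace_le_dual_iff {ι : Type*} (M : Matrix ι (Fin n ⊕ Fin n) F) :
    rowSpace M ≤ sympDual (rowSpace M) ↔ ∀ i j, sympForm (M i) (M j) = 0 := by
  constructor
  · intro h i j
    exact h (Submodule.subset_span ⟨i, rfl⟩) _ (Submodule.subset_span ⟨j, rfl⟩)
  · intro h
    refine Submodule.span_le.2 ?_
    rintro _ ⟨i, rfl⟩ v hv
    have key : rowSpace M ≤ LinearMap.ker (sympBilin F n (M i)) := by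
      refine Submodule.span_le.2 ?_
      rintro _ ⟨j, rfl⟩
      exact h i j
    exact key hv

lemma mul_transpose_eq_iff (A B A2 B2 : Matrix (Fin n) (Fin n) F) :
    A * B2ᵀ = B * A2ᵀ ↔
      ∀ i j, sympForm (Sum.elim (A i) (B i)) (Sum.elim (A2 j) (B2 j)) = 0 := by
  rw [← Matrix.ext_iff]
  simp [sympForm, Matrix.mul_apply, sub_eq_zero, mul_comm]

/-- Suppose the two-generator QC code `C` has a parity-check
matrix `H = ((P₁, Q₁), (P₂, Q₂))`, built from the circulant matrices of
`p₁, q₁, p₂, q₂`, whose row space is `C^{⊥s}`. Then `C` is symplectic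
dual-containing iff `P₁Q₁ᵗ = Q₁P₁ᵗ`, `P₂Q₂ᵗ = Q₂P₂ᵗ` and `P₁Q₂ᵗ = Q₁P₂ᵗ`. -/
theorem twoGenQC_dualContaining_iff_matrix
    {F : Type*} [Field F] [Fintype F] {n : ℕ} (hn : n ≠ 0)
    (p₁ q₁ p₂ q₂ : AdjoinRoot (X ^ n - 1 : F[X]))
    (P₁ Q₁ P₂ Q₂ : Matrix (Fin n) (Fin n) F)
    (hP₁ : P₁ = Matrix.circulant (toVecL hn p₁))
    (hQ₁ : Q₁ = Matrix.circulant (toVecL hn q₁))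
    (hP₂ : P₂ = Matrix.circulant (toVecL hn p₂))
    (hQ₂ : Q₂ = Matrix.circulant (toVecL hn q₂))
    (C : Submodule F ((Fin n ⊕ Fin n) → F))
    (hH : rowSpace (Matrix.fromBlocks P₁ Q₁ P₂ Q₂) = sympDual C) :
    sympDual C ≤ C ↔
      P₁ * Q₁ᵀ = Q₁ * P₁ᵀ ∧ P₂ * Q₂ᵀ = Q₂ * P₂ᵀ ∧ P₁ * Q₂ᵀ = Q₁ * P₂ᵀ := by
  have e1 : ∀ i, Matrix.fromBlocks P₁ Q₁ P₂ Q₂ (Sum.inl i) = Sum.elim (P₁ i) (Q₁ i) := by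
    intro i; ext (k | k) <;> rfl
  have e2 : ∀ i, Matrix.fromBlocks P₁ Q₁ P₂ Q₂ (Sum.inr i) = Sum.elim (P₂ i) (Q₂ i) := by
    intro i; ext (k | k) <;> rfl
  have h1 : sympDual C ≤ C ↔ sympDual C ≤ sympDual (sympDual C) := by
    rw [sympDual_sympDual]
  rw [h1, ← hH, rowSpace_le_dual_iff, mul_transpose_eq_iff, mul_transpose_eq_iff,
    mul_transpose_eq_iff]
  simp only [Sum.forall, e1, e2]
  constructor
  · intro h
    exact ⟨fun i j => (h.1 i).1 j, fun i j => (h.2 i).2 j, fun i j => (h.1 i).2 j⟩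
  · rintro ⟨ha, hb, hc⟩
    refine ⟨fun i => ⟨ha i, hc i⟩, fun i => ⟨fun j => ?_, hb i⟩⟩
    rw [sympForm_swap, hc, neg_zero]

end
end
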